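/- Under the stated assumptions, for every t ≥ 1 the BFGS iterates satisfy (f(x_t) − f(x_*))/(f(x₀) − f(x_*)) ≤ (1 − α(1−β)·exp(−Ψ(B̄₀)/t)/(1+D₀)²)^t. -/

import Mathlib

/-!
Write `H⋆` for the Hessian at the minimizer, `c = 1 + D 0`, `Q = (c H⋆)⁻¹`, and
`V n = Psi (c⁻¹ S⁻¹ (B n) S⁻¹)` with `S² = H⋆`. Then `V n = tr (Q B n) - d - log det (Q B n)` is
nonnegative, and the proof plays its growth against the decrease of the gap `f (x n) - f x⋆`.

*Geometry.* Strong self-concordance makes `φ''^(-1/2)` grow at rate at most `M / 2` along lines, so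
integrating twice bounds `f - f x⋆` below by `(4 / M²) ω(M r / 2)`, where `r` is the distance to
`x⋆` in the `H⋆`-norm (`omegaFn_le`). Since the gap never increases, all iterates, and the segments
between them, satisfy `M r ≤ D 0`, and there the Hessian agrees with `H⋆` up to the factor `c`
(`dist_le_of_sublevel`, `hess_comparable`). This yields `yᵀ Q y ≤ sᵀ y` for each step
(`curvature_le`) and `f x - f x⋆ ≤ c² ∇f(x)ᵀ Q ∇f(x)` (`gap_le`).

*One step.* Put `a = -∇f(x)ᵀ s`, `k = ∇f(x)ᵀ Q ∇f(x)` and `ρ = a² / (k sᵀy)`. The trace and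
determinant formulas for the update give `V (n+1) - V n ≤ log ρ` (`Psi_step`), while the Armijo and
Wolfe conditions and `gap_le` give the contraction factor `1 - κ ρ` for the gap, where
`κ = α (1 - β) / c²`.

*Telescoping.* With `L = -V 0 / t` and `b = 1 - κ exp L`, the tangent to `exp` at `L` bounds
`1 - κ ρ` by `b exp (K (L + V n - V (n+1)))` for the constant `K = κ exp L / b` (`factor_le`).
Multiplying `t` such bounds leaves `b ^ t * exp (-K * V t) ≤ b ^ t`.
-/

open Matrix Real Finset

noncomputable section

/-- `ω(x) = x − log(1+x)`. -/
def omegaFn (x : ℝ) : ℝ := x - Real.log (1 + x)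

/-- `Ψ(A) = Tr(A) − d − log det A`. -/
def Psi (d : ℕ) (A : Matrix (Fin d) (Fin d) ℝ) : ℝ :=
  A.trace - (d : ℝ) - Real.log A.det

/-- Loewner order: `A ⪯ B` iff `B − A` is positive semidefinite. -/
def loewnerLE {d : ℕ} (A B : Matrix (Fin d) (Fin d) ℝ) : Prop := (B - A).PosSemidef

/-- The BFGS Hessian-approximation update
`B⁺ = B − (B s sᵀ B)/(sᵀ B s) + (y yᵀ)/(sᵀ y)`. -/
def bfgsUpdate {d : ℕ} (B : Matrix (Fin d) (Fin d) ℝ) (s y : Fin d → ℝ) :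
    Matrix (Fin d) (Fin d) ℝ :=
  B - (s ⬝ᵥ (B *ᵥ s))⁻¹ • vecMulVec (B *ᵥ s) (Bᵀ *ᵥ s) + (s ⬝ᵥ y)⁻¹ • vecMulVec y y

/-- `M`-strong self-concordance of a Hessian field:
`∇²f(x) − ∇²f(y) ⪯ M‖x−y‖_z ∇²f(y)` for all `x, y, z`. -/
def StronglySelfConcordant {d : ℕ} (hess : (Fin d → ℝ) → Matrix (Fin d) (Fin d) ℝ)
    (M : ℝ) : Prop :=
  ∀ x y z : Fin d → ℝ,
    loewnerLE (hess x - hess y)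
      ((M * Real.sqrt ((x - y) ⬝ᵥ (hess z *ᵥ (x - y)))) • hess y)


/-! ### The BFGS update and the potential -/

section
variable {d : ℕ} {A B : Matrix (Fin d) (Fin d) ℝ}

theorem dot_mulVec_comm (hA : A.IsHermitian) (u v : Fin d → ℝ) :
    u ⬝ᵥ A *ᵥ v = v ⬝ᵥ A *ᵥ u := by
  have hT : Aᵀ = A := by simpa [Matrix.IsSymm] using hA
  rw [dotProduct_mulVec, ← mulVec_transpose, hT, dotProduct_comm]

theorem dot_mulVec_pos (hA : A.PosDef) {v : Fin d → ℝ} (hv : v ≠ 0) : 0 < v ⬝ᵥ A *ᵥ v := by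
  simpa using hA.dotProduct_mulVec_pos hv

theorem dot_mulVec_nonneg (hA : A.PosSemidef) (v : Fin d → ℝ) : 0 ≤ v ⬝ᵥ A *ᵥ v := by
  simpa using hA.dotProduct_mulVec_nonneg v

theorem mulVec_inv_mulVec (hA : A.PosDef) (v : Fin d → ℝ) : A *ᵥ (A⁻¹ *ᵥ v) = v := by
  have := (Matrix.isUnit_iff_isUnit_det _).1 hA.isUnit
  rw [mulVec_mulVec, Matrix.mul_nonsing_inv _ this, one_mulVec]

theorem inv_mulVec_mulVec (hA : A.PosDef) (v : Fin d → ℝ) : A⁻¹ *ᵥ (A *ᵥ v) = v := by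
  have := (Matrix.isUnit_iff_isUnit_det _).1 hA.isUnit
  rw [mulVec_mulVec, Matrix.nonsing_inv_mul _ this, one_mulVec]

/-- Termwise `λ - 1 - log λ ≥ 0` over the eigenvalues. -/
theorem Psi_nonneg (hA : A.PosDef) : 0 ≤ Psi d A := by
  have hH := hA.isHermitian
  have h1 := hH.trace_eq_sum_eigenvalues
  have h2 := hH.det_eq_prod_eigenvalues
  simp only [RCLike.ofReal_real_eq_id, id] at h1 h2
  have hpos : ∀ i, 0 < hH.eigenvalues i := hA.eigenvalues_pos
  unfold Psi
  rw [h1, h2, Real.log_prod (fun i _ => (hpos i).ne')]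
  have : ∑ i, (hH.eigenvalues i - 1 - Real.log (hH.eigenvalues i)) ≥ 0 :=
    Finset.sum_nonneg fun i _ => by linarith [Real.log_le_sub_one_of_pos (hpos i)]
  simpa [Finset.sum_sub_distrib] using this

theorem bfgsUpdate_eq (hB : B.IsHermitian) (s y : Fin d → ℝ) :
    bfgsUpdate B s y = B - (s ⬝ᵥ (B *ᵥ s))⁻¹ • vecMulVec (B *ᵥ s) (B *ᵥ s)
      + (s ⬝ᵥ y)⁻¹ • vecMulVec y y := by
  have hT : Bᵀ = B := by simpa [Matrix.IsSymm] using hB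
  rw [bfgsUpdate, hT]

theorem bfgsUpdate_posDef (hB : B.PosDef) {s y : Fin d → ℝ} (hs : s ≠ 0) (hsy : 0 < s ⬝ᵥ y) :
    (bfgsUpdate B s y).PosDef := by
  have hsBs := dot_mulVec_pos hB hs
  rw [bfgsUpdate_eq hB.isHermitian]
  have hherm : ∀ (c : ℝ) (u : Fin d → ℝ), (c • vecMulVec u u).IsHermitian := by
    intro c u
    ext i j
    simp [vecMulVec_apply, mul_comm (u i)]
  refine PosDef.of_dotProduct_mulVec_pos
    ((hB.isHermitian.sub (hherm _ _)).add (hherm _ _)) ?_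
  intro v hv
  have hexp : star v ⬝ᵥ (B - (s ⬝ᵥ (B *ᵥ s))⁻¹ • vecMulVec (B *ᵥ s) (B *ᵥ s)
      + (s ⬝ᵥ y)⁻¹ • vecMulVec y y) *ᵥ v
      = v ⬝ᵥ B *ᵥ v - (v ⬝ᵥ B *ᵥ s) ^ 2 / (s ⬝ᵥ B *ᵥ s) + (v ⬝ᵥ y) ^ 2 / (s ⬝ᵥ y) := by
    simp only [star_trivial, add_mulVec, sub_mulVec, smul_mulVec, vecMulVec_mulVec,
      dotProduct_add, dotProduct_sub, dotProduct_smul, smul_eq_mul, op_smul_eq_smul]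
    rw [dotProduct_comm (B *ᵥ s) v, dotProduct_comm y v]
    ring
  rw [hexp]
  -- the component of `v` that is `B`-orthogonal to `s`
  set c := (v ⬝ᵥ B *ᵥ s) / (s ⬝ᵥ B *ᵥ s) with hc
  have hw : (v - c • s) ⬝ᵥ B *ᵥ (v - c • s)
      = v ⬝ᵥ B *ᵥ v - (v ⬝ᵥ B *ᵥ s) ^ 2 / (s ⬝ᵥ B *ᵥ s) := by
    simp only [mulVec_sub, mulVec_smul, dotProduct_sub, sub_dotProduct, smul_dotProduct,
      dotProduct_smul, smul_eq_mul]
    rw [dot_mulVec_comm hB.isHermitian s v, hc]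
    field_simp
    ring
  rw [← hw]
  by_cases h0 : v - c • s = 0
  · have hvs : v = c • s := sub_eq_zero.1 h0
    have hc0 : c ≠ 0 := by
      intro h
      rw [h, zero_smul] at hvs
      exact hv hvs
    have : 0 < (v ⬝ᵥ y) ^ 2 / (s ⬝ᵥ y) := by
      have h2 : v ⬝ᵥ y = c * (s ⬝ᵥ y) := by
        conv_lhs => rw [hvs]
        simp
      rw [h2]
      positivity
    rw [h0]
    simpa using this
  · have h1 := dot_mulVec_pos hB h0
    positivity

/-- Factor the rank-two correction through `ℝ²` and apply the matrix determinant lemma; the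
remaining `2 × 2` matrix has a zero in its top left corner. -/
theorem bfgsUpdate_det (hB : B.PosDef) {s y : Fin d → ℝ} (hs : s ≠ 0) (hsy : 0 < s ⬝ᵥ y) :
    (bfgsUpdate B s y).det = B.det * ((s ⬝ᵥ y) / (s ⬝ᵥ B *ᵥ s)) := by
  have hsBs := dot_mulVec_pos hB hs
  have hunit := (Matrix.isUnit_iff_isUnit_det _).1 hB.isUnit
  rw [bfgsUpdate_eq hB.isHermitian]
  let U : Matrix (Fin d) (Fin 2) ℝ :=
    Matrix.of fun i => ![-(s ⬝ᵥ B *ᵥ s)⁻¹ * (B *ᵥ s) i, (s ⬝ᵥ y)⁻¹ * y i]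
  let V : Matrix (Fin 2) (Fin d) ℝ := Matrix.of ![B *ᵥ s, y]
  have hUV : B - (s ⬝ᵥ (B *ᵥ s))⁻¹ • vecMulVec (B *ᵥ s) (B *ᵥ s)
      + (s ⬝ᵥ y)⁻¹ • vecMulVec y y = B + U * V := by
    ext i j
    simp [U, V, Matrix.mul_apply, vecMulVec_apply, Fin.sum_univ_two]
    ring
  have hent : ∀ (k l : Fin 2) (a b : Fin d → ℝ) (r : ℝ), V k = a → (∀ i, U i l = r * b i) →
      (V * B⁻¹ * U) k l = r * (a ⬝ᵥ B⁻¹ *ᵥ b) := by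
    intro k l a b r ha hb
    have h2 : (fun i => U i l) = r • b := by ext i; simp [hb i]
    have h1 : (V * B⁻¹ * U) k l = V k ⬝ᵥ B⁻¹ *ᵥ (fun i => U i l) := by
      rw [Matrix.mul_assoc, Matrix.mul_apply]
      simp [dotProduct, mulVec, Matrix.mul_apply]
    rw [h1, h2, ha, mulVec_smul, dotProduct_smul, smul_eq_mul]
  rw [hUV, Matrix.det_add_mul _ _ hunit, Matrix.det_fin_two]
  congr 1
  simp only [Matrix.add_apply]
  rw [hent 0 0 (B *ᵥ s) (B *ᵥ s) _ rfl (fun i => rfl), hent 0 1 (B *ᵥ s) y _ rfl (fun i => rfl),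
    hent 1 0 y (B *ᵥ s) _ rfl (fun i => rfl), hent 1 1 y y _ rfl (fun i => rfl)]
  have e1 : (B *ᵥ s) ⬝ᵥ B⁻¹ *ᵥ y = s ⬝ᵥ y := by
    rw [dot_mulVec_comm hB.inv.isHermitian, inv_mulVec_mulVec hB, dotProduct_comm]
  rw [inv_mulVec_mulVec hB, e1, dotProduct_comm (B *ᵥ s) s, dotProduct_comm y s]
  simp
  field_simp
  ring

theorem trace_mul_vecMulVec (Q : Matrix (Fin d) (Fin d) ℝ) (u : Fin d → ℝ) :
    (Q * vecMulVec u u).trace = u ⬝ᵥ Q *ᵥ u := by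
  rw [mul_vecMulVec, trace_vecMulVec, dotProduct_comm]

/-- `Psi` of the conjugated matrix `c⁻¹ S⁻¹ B S⁻¹` only depends on `Q B` with `Q = (c S²)⁻¹`. -/
theorem Psi_conj (S : Matrix (Fin d) (Fin d) ℝ) (c : ℝ) :
    Psi d (c⁻¹ • (S⁻¹ * B * S⁻¹))
      = ((c⁻¹ • (S * S)⁻¹) * B).trace - d - Real.log ((c⁻¹ • (S * S)⁻¹) * B).det := by
  unfold Psi
  have h1 : (c⁻¹ • (S⁻¹ * B * S⁻¹)).trace = ((c⁻¹ • (S * S)⁻¹) * B).trace := by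
    rw [Matrix.smul_mul, trace_smul, trace_smul, Matrix.mul_inv_rev, Matrix.trace_mul_comm,
      Matrix.mul_assoc, ← Matrix.mul_assoc]
  have h2 : (c⁻¹ • (S⁻¹ * B * S⁻¹)).det = ((c⁻¹ • (S * S)⁻¹) * B).det := by
    rw [Matrix.smul_mul, det_smul, det_smul, Matrix.mul_inv_rev]
    simp only [det_mul]
    ring
  rw [h1, h2]

theorem conj_posDef {S : Matrix (Fin d) (Fin d) ℝ} (hS : S.PosDef) (hB : B.PosDef) {c : ℝ}
    (hc : 0 < c) : (c⁻¹ • (S⁻¹ * B * S⁻¹)).PosDef := by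
  refine PosDef.smul ?_ (inv_pos.2 hc)
  have := hB.conjTranspose_mul_mul_same (B := S⁻¹)
    (Matrix.mulVec_injective_iff_isUnit.2 hS.inv.isUnit)
  rwa [hS.inv.isHermitian.eq] at this

/-- One BFGS step changes the potential `Psi` by at most `log (a² / (k · sᵀy))`, provided the
curvature pair satisfies `yᵀ Q y ≤ sᵀ y`. Here the step comes from `B s = -η g`, with
`a = -gᵀ s` and `k = gᵀ Q g`. -/
theorem Psi_step {Q : Matrix (Fin d) (Fin d) ℝ} (hQ : Q.PosDef) (hB : B.PosDef)
    {s y g : Fin d → ℝ} {η : ℝ} (hη : 0 < η) (hs : s ≠ 0) (hg : g ≠ 0) (hsy : 0 < s ⬝ᵥ y)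
    (hBs : B *ᵥ s = -(η • g)) (hyQy : y ⬝ᵥ Q *ᵥ y ≤ s ⬝ᵥ y) :
    ((Q * bfgsUpdate B s y).trace - d - Real.log (Q * bfgsUpdate B s y).det)
      - ((Q * B).trace - d - Real.log (Q * B).det)
      ≤ Real.log ((-(g ⬝ᵥ s)) ^ 2 / ((g ⬝ᵥ Q *ᵥ g) * (s ⬝ᵥ y))) := by
  have hsBs := dot_mulVec_pos hB hs
  have hk := dot_mulVec_pos hQ hg
  have htr : (Q * bfgsUpdate B s y).trace = (Q * B).trace
      - (s ⬝ᵥ B *ᵥ s)⁻¹ * ((B *ᵥ s) ⬝ᵥ Q *ᵥ (B *ᵥ s)) + (s ⬝ᵥ y)⁻¹ * (y ⬝ᵥ Q *ᵥ y) := by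
    rw [bfgsUpdate_eq hB.isHermitian]
    simp only [Matrix.mul_add, Matrix.mul_sub, Matrix.mul_smul, trace_add, trace_sub, trace_smul,
      trace_mul_vecMulVec, smul_eq_mul]
  have e1 : s ⬝ᵥ B *ᵥ s = η * (-(g ⬝ᵥ s)) := by
    rw [hBs, dotProduct_neg, dotProduct_smul, dotProduct_comm s g, smul_eq_mul]
    ring
  have e2 : (B *ᵥ s) ⬝ᵥ Q *ᵥ (B *ᵥ s) = η ^ 2 * (g ⬝ᵥ Q *ᵥ g) := by
    rw [hBs, mulVec_neg, mulVec_smul]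
    simp only [neg_dotProduct, dotProduct_neg, smul_dotProduct, dotProduct_smul, smul_eq_mul]
    ring
  have hdet : Real.log (Q * bfgsUpdate B s y).det
      = Real.log (Q * B).det + Real.log ((s ⬝ᵥ y) / (s ⬝ᵥ B *ᵥ s)) := by
    rw [det_mul, bfgsUpdate_det hB hs hsy, ← mul_assoc, ← det_mul, Real.log_mul]
    · rw [det_mul]
      exact (mul_pos hQ.det_pos hB.det_pos).ne'
    · positivity
  rw [htr, hdet]
  rw [e2]
  rw [e1] at hsBs ⊢
  set a := -(g ⬝ᵥ s)
  set k := g ⬝ᵥ Q *ᵥ g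
  set b := s ⬝ᵥ y
  have ha : 0 < a := by
    by_contra! h
    nlinarith
  have h1 : b⁻¹ * (y ⬝ᵥ Q *ᵥ y) ≤ 1 := by
    rw [inv_mul_le_iff₀ hsy]
    linarith
  have h2 : (η * a)⁻¹ * (η ^ 2 * k) = η * k / a := by field_simp
  have h3 : Real.log (η * k / a) ≤ η * k / a - 1 := Real.log_le_sub_one_of_pos (by positivity)
  have h4 : Real.log (a ^ 2 / (k * b)) = - Real.log (η * k / a) - Real.log (b / (η * a)) := by
    rw [← Real.log_inv, ← Real.log_div (by positivity) (by positivity)]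
    congr 1
    field_simp
  rw [h2, h4]
  linarith

end

/-! ### Self-concordant functions near the minimizer -/

section
variable {d : ℕ} {f : (Fin d → ℝ) → ℝ} {grad : (Fin d → ℝ) → (Fin d → ℝ)}
  {hess : (Fin d → ℝ) → Matrix (Fin d) (Fin d) ℝ}

theorem hasDerivAt_line_f (hf : ContDiff ℝ 2 f) (hgrad : ∀ x v, fderiv ℝ f x v = grad x ⬝ᵥ v)
    (p h : Fin d → ℝ) (τ : ℝ) :
    HasDerivAt (fun τ : ℝ => f (p + τ • h)) (grad (p + τ • h) ⬝ᵥ h) τ := by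
  have h1 : HasDerivAt (fun τ : ℝ => p + τ • h) h τ := by
    simpa using ((hasDerivAt_id τ).smul_const h).const_add p
  have h2 := (hf.differentiable (by norm_num) (p + τ • h)).hasFDerivAt
  rw [← hgrad]
  exact h2.comp_hasDerivAt τ h1

theorem differentiable_grad (hf : ContDiff ℝ 2 f)
    (hgrad : ∀ x v, fderiv ℝ f x v = grad x ⬝ᵥ v) : Differentiable ℝ grad := by
  have h1 : ContDiff ℝ 1 (fderiv ℝ f) := hf.fderiv_right (by norm_num)
  rw [differentiable_pi]
  intro i
  have h2 : (fun x => grad x i) = fun x => fderiv ℝ f x (Pi.single i 1) := by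
    ext x
    simp [hgrad]
  rw [h2]
  exact (h1.differentiable (by norm_num)).clm_apply (differentiable_const _)

theorem hasDerivAt_line_grad (hf : ContDiff ℝ 2 f)
    (hgrad : ∀ x v, fderiv ℝ f x v = grad x ⬝ᵥ v)
    (hhess : ∀ x v, fderiv ℝ grad x v = hess x *ᵥ v) (p h v : Fin d → ℝ) (τ : ℝ) :
    HasDerivAt (fun τ : ℝ => v ⬝ᵥ grad (p + τ • h)) (v ⬝ᵥ hess (p + τ • h) *ᵥ h) τ := by
  have h1 : HasDerivAt (fun τ : ℝ => p + τ • h) h τ := by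
    simpa using ((hasDerivAt_id τ).smul_const h).const_add p
  have h2 := (differentiable_grad hf hgrad (p + τ • h)).hasFDerivAt.comp_hasDerivAt τ h1
  rw [hhess] at h2
  have h3 := hasDerivAt_pi.1 h2
  simp only [dotProduct]
  exact HasDerivAt.fun_sum fun i _ => (h3 i).const_mul (v i)

end

/-- The bound behind the Lipschitz property of `τ ↦ φ''(τ)^(-1/2)`, with `p² = φ''(a)` and
`q² = φ''(b)`. -/
theorem inv_le_inv_add {p q L : ℝ} (hp : 0 < p) (hq : 0 < q) (hL : 0 ≤ L)
    (h : q ^ 2 - p ^ 2 ≤ 2 * L * p ^ 3) : p⁻¹ ≤ q⁻¹ + L := by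
  rcases le_total q p with hqp | hqp
  · have := inv_anti₀ hq hqp
    linarith
  · have h1 : q - p ≤ L * p ^ 2 := by
      by_contra! h2
      nlinarith [mul_le_mul_of_nonneg_left (show 2 * p ≤ q + p by linarith)
        (show 0 ≤ q - p by linarith)]
    have h2 : L * p ^ 2 ≤ L * (p * q) := by
      apply mul_le_mul_of_nonneg_left _ hL
      nlinarith
    have h3 : p⁻¹ = q⁻¹ + (q - p) / (p * q) := by field_simp; ring
    have h4 : (q - p) / (p * q) ≤ L := by
      rw [div_le_iff₀ (by positivity)]
      linarith
    linarith

theorem le_of_hasDerivAt_nonneg {g g' : ℝ → ℝ} {T : ℝ} (hT : 0 ≤ T)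
    (hd : ∀ τ, 0 ≤ τ → HasDerivAt g (g' τ) τ) (hn : ∀ τ, 0 ≤ τ → 0 ≤ g' τ) : g 0 ≤ g T := by
  have hm : MonotoneOn g (Set.Icc 0 T) := by
    refine monotoneOn_of_deriv_nonneg (convex_Icc 0 T)
      (fun τ hτ => (hd τ hτ.1).continuousAt.continuousWithinAt) ?_ ?_
    · intro τ hτ
      exact (hd τ (interior_subset hτ).1).differentiableAt.differentiableWithinAt
    · intro τ hτ
      rw [(hd τ (interior_subset hτ).1).deriv]
      exact hn τ (interior_subset hτ).1
  exact hm ⟨le_rfl, hT⟩ ⟨hT, le_rfl⟩ hT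

theorem omegaFn_lt {a b : ℝ} (ha : 0 ≤ a) (hab : a < b) : omegaFn a < omegaFn b := by
  unfold omegaFn
  have h1 : Real.log (1 + b) - Real.log (1 + a) < b - a := by
    rw [← Real.log_div (by linarith) (by linarith)]
    have h2 : (1 + b) / (1 + a) ≠ 1 := by
      rw [Ne, div_eq_one_iff_eq (by linarith)]
      linarith
    have h3 := Real.log_lt_sub_one_of_pos (x := (1 + b) / (1 + a))
      (div_pos (by linarith) (by linarith)) h2
    have h4 : (1 + b) / (1 + a) - 1 ≤ b - a := by
      rw [div_sub_one (by linarith), div_le_iff₀ (by linarith)]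
      nlinarith
    linarith
  linarith

section
variable {d : ℕ} {f : (Fin d → ℝ) → ℝ} {grad : (Fin d → ℝ) → (Fin d → ℝ)}
  {hess : (Fin d → ℝ) → Matrix (Fin d) (Fin d) ℝ} {M : ℝ}

theorem StronglySelfConcordant.quad_le (hssc : StronglySelfConcordant hess M)
    (x y z v : Fin d → ℝ) :
    v ⬝ᵥ hess x *ᵥ v ≤
      (1 + M * Real.sqrt ((x - y) ⬝ᵥ (hess z *ᵥ (x - y)))) * (v ⬝ᵥ hess y *ᵥ v) := by
  have h := dot_mulVec_nonneg (hssc x y z) v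
  simp only [sub_mulVec, smul_mulVec, dotProduct_sub, dotProduct_smul, smul_eq_mul] at h
  linarith

/-- Along a line, `τ ↦ (hᵀ ∇²f(p + τ h) h)^(-1/2)` grows at rate at most `M / 2`. -/
theorem inv_sqrt_quad_le (hpd : ∀ x, (hess x).PosDef) (hM : 0 < M)
    (hssc : StronglySelfConcordant hess M) (p : Fin d → ℝ) {h : Fin d → ℝ} (hh : h ≠ 0)
    {τ : ℝ} (hτ : 0 ≤ τ) :
    (Real.sqrt (h ⬝ᵥ hess (p + τ • h) *ᵥ h))⁻¹
      ≤ (Real.sqrt (h ⬝ᵥ hess p *ᵥ h))⁻¹ + M * τ / 2 := by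
  have ha := dot_mulVec_pos (hpd (p + τ • h)) hh
  have hb := dot_mulVec_pos (hpd p) hh
  refine inv_le_inv_add (Real.sqrt_pos.2 ha) (Real.sqrt_pos.2 hb) (by positivity) ?_
  have h1 := hssc.quad_le p (p + τ • h) (p + τ • h) h
  have h2 : p - (p + τ • h) = (-τ) • h := by simp
  rw [h2, mulVec_smul, smul_dotProduct, dotProduct_smul, smul_eq_mul, smul_eq_mul,
    ← mul_assoc, neg_mul_neg, Real.sqrt_mul (mul_self_nonneg τ), Real.sqrt_mul_self hτ] at h1
  rw [Real.sq_sqrt hb.le, pow_succ _ 2, Real.sq_sqrt ha.le]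
  nlinarith

/-- The standard self-concordant lower bound on the growth of `f` away from its minimizer,
obtained by integrating the lower bound on the second derivative twice. -/
theorem omegaFn_le (hf : ContDiff ℝ 2 f) (hgrad : ∀ x v, fderiv ℝ f x v = grad x ⬝ᵥ v)
    (hhess : ∀ x v, fderiv ℝ grad x v = hess x *ᵥ v) (hpd : ∀ x, (hess x).PosDef) (hM : 0 < M)
    (hssc : StronglySelfConcordant hess M) {xstar : Fin d → ℝ} (hstar : grad xstar = 0)
    (x : Fin d → ℝ) :
    omegaFn (M * Real.sqrt ((x - xstar) ⬝ᵥ hess xstar *ᵥ (x - xstar)) / 2)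
      ≤ M ^ 2 * (f x - f xstar) / 4 := by
  set h := x - xstar with hh
  have hx : xstar + (1 : ℝ) • h = x := by simp [hh]
  by_cases h0 : h = 0
  · have : x = xstar := sub_eq_zero.1 h0
    rw [h0, this]
    simp [omegaFn]
  set r := Real.sqrt (h ⬝ᵥ hess xstar *ᵥ h) with hr
  have hr0 : 0 < r := Real.sqrt_pos.2 (dot_mulVec_pos (hpd xstar) h0)
  set m := M * r / 2 with hm
  have hm0 : 0 < m := by positivity
  have hsecond : ∀ τ : ℝ, 0 ≤ τ →
      r ^ 2 / (1 + m * τ) ^ 2 ≤ h ⬝ᵥ hess (xstar + τ • h) *ᵥ h := by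
    intro τ hτ
    have hq := dot_mulVec_pos (hpd (xstar + τ • h)) h0
    have h1 := inv_sqrt_quad_le hpd hM hssc xstar h0 hτ
    rw [← hr] at h1
    have h2 : r⁻¹ + M * τ / 2 = (r / (1 + m * τ))⁻¹ := by
      rw [inv_div, hm]
      field_simp
    have hrp : 0 < r / (1 + m * τ) := by positivity
    rw [h2, inv_le_inv₀ (Real.sqrt_pos.2 hq) hrp] at h1
    rw [← div_pow, ← Real.sq_sqrt hq.le]
    exact pow_le_pow_left₀ hrp.le h1 2
  have hinv : ∀ τ : ℝ, 0 ≤ τ → HasDerivAt (fun τ : ℝ => (1 + m * τ)⁻¹)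
      (-m / (1 + m * τ) ^ 2) τ := by
    intro τ hτ
    have h1 : HasDerivAt (fun τ : ℝ => 1 + m * τ) m τ := by
      simpa using ((hasDerivAt_id τ).const_mul m).const_add 1
    exact h1.inv (by positivity)
  have hlog : ∀ τ : ℝ, 0 ≤ τ → HasDerivAt (fun τ : ℝ => Real.log (1 + m * τ))
      (m / (1 + m * τ)) τ := by
    intro τ hτ
    have h1 : HasDerivAt (fun τ : ℝ => 1 + m * τ) m τ := by
      simpa using ((hasDerivAt_id τ).const_mul m).const_add 1
    exact h1.log (by positivity)
  have hfirst : ∀ τ : ℝ, 0 ≤ τ →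
      r ^ 2 / m * (1 - (1 + m * τ)⁻¹) ≤ h ⬝ᵥ grad (xstar + τ • h) := by
    intro T hT
    have := le_of_hasDerivAt_nonneg hT
      (g := fun τ => h ⬝ᵥ grad (xstar + τ • h) - r ^ 2 / m * (1 - (1 + m * τ)⁻¹))
      (g' := fun τ => h ⬝ᵥ hess (xstar + τ • h) *ᵥ h
        - r ^ 2 / m * (-(-m / (1 + m * τ) ^ 2)))
      (fun τ hτ => (hasDerivAt_line_grad hf hgrad hhess xstar h h τ).sub
        (((hinv τ hτ).const_sub 1).const_mul _))
      (fun τ hτ => by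
        have h1 : r ^ 2 / m * (-(-m / (1 + m * τ) ^ 2)) = r ^ 2 / (1 + m * τ) ^ 2 := by
          have : (1 + m * τ) ≠ 0 := by positivity
          field_simp
        rw [h1]
        linarith [hsecond τ hτ])
    simp only [zero_smul, add_zero, hstar, dotProduct_zero, mul_zero, inv_one, sub_self] at this
    linarith
  have := le_of_hasDerivAt_nonneg (zero_le_one' ℝ)
      (g := fun τ => f (xstar + τ • h) - r ^ 2 / m ^ 2 * (m * τ - Real.log (1 + m * τ)))
      (g' := fun τ => grad (xstar + τ • h) ⬝ᵥ h
        - r ^ 2 / m ^ 2 * (m - m / (1 + m * τ)))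
      (fun τ hτ => by
        have h1 : HasDerivAt (fun τ : ℝ => m * τ) m τ := by
          simpa using (hasDerivAt_id τ).const_mul m
        exact (hasDerivAt_line_f hf hgrad xstar h τ).sub ((h1.sub (hlog τ hτ)).const_mul _))
      (fun τ hτ => by
        have h1 : r ^ 2 / m ^ 2 * (m - m / (1 + m * τ)) = r ^ 2 / m * (1 - (1 + m * τ)⁻¹) := by
          have : (1 + m * τ) ≠ 0 := by positivity
          field_simp
        rw [h1, dotProduct_comm]
        linarith [hfirst τ hτ])
  simp only [hx, zero_smul, add_zero, mul_zero, Real.log_one, sub_self, mul_one, sub_zero] at this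
  have h4 : r ^ 2 / m ^ 2 = 4 / M ^ 2 := by
    rw [hm]
    field_simp
    norm_num
  rw [h4] at this
  have h5 : 4 / M ^ 2 * omegaFn m ≤ f x - f xstar := by
    unfold omegaFn
    linarith
  rw [div_mul_eq_mul_div, div_le_iff₀ (by positivity)] at h5
  linarith

/-- Every point of the initial sublevel set lies within distance `D / M` of the minimizer, in the
local norm at the minimizer. -/
theorem dist_le_of_sublevel (hf : ContDiff ℝ 2 f) (hgrad : ∀ x v, fderiv ℝ f x v = grad x ⬝ᵥ v)
    (hhess : ∀ x v, fderiv ℝ grad x v = hess x *ᵥ v) (hpd : ∀ x, (hess x).PosDef) (hM : 0 < M)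
    (hssc : StronglySelfConcordant hess M) {xstar : Fin d → ℝ} (hstar : grad xstar = 0)
    {x x₀ : Fin d → ℝ} {D : ℝ} (hD0 : 0 ≤ D)
    (hD : omegaFn (D / 2) = M ^ 2 * (f x₀ - f xstar) / 4) (hx : f x ≤ f x₀) :
    M ^ 2 * ((x - xstar) ⬝ᵥ hess xstar *ᵥ (x - xstar)) ≤ D ^ 2 := by
  have hq := dot_mulVec_nonneg (hpd xstar).posSemidef (x - xstar)
  have h1 := omegaFn_le hf hgrad hhess hpd hM hssc hstar x
  set q := (x - xstar) ⬝ᵥ hess xstar *ᵥ (x - xstar)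
  have h2 : M * Real.sqrt q ≤ D := by
    by_contra! h
    have h3 := omegaFn_lt (a := D / 2) (b := M * Real.sqrt q / 2) (by linarith) (by linarith)
    have h4 : M ^ 2 * (f x - f xstar) ≤ M ^ 2 * (f x₀ - f xstar) := by gcongr
    linarith
  have h3 : M ^ 2 * q = (M * Real.sqrt q) ^ 2 := by rw [mul_pow, Real.sq_sqrt hq]
  rw [h3]
  exact pow_le_pow_left₀ (by positivity) h2 2

theorem quad_segment_le {H : Matrix (Fin d) (Fin d) ℝ} (hH : H.PosDef) (a s : Fin d → ℝ)
    {τ K : ℝ} (h0 : 0 ≤ τ) (h1 : τ ≤ 1) (ha : a ⬝ᵥ H *ᵥ a ≤ K)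
    (hb : (a + s) ⬝ᵥ H *ᵥ (a + s) ≤ K) :
    (a + τ • s) ⬝ᵥ H *ᵥ (a + τ • s) ≤ K := by
  have hs := dot_mulVec_nonneg hH.posSemidef s
  have hc := dot_mulVec_comm hH.isHermitian a s
  simp only [mulVec_add, mulVec_smul, dotProduct_add, add_dotProduct, smul_dotProduct,
    dotProduct_smul, smul_eq_mul] at *
  rw [hc] at *
  have e := mul_le_mul_of_nonneg_left ha (sub_nonneg.2 h1)
  have e2 := mul_le_mul_of_nonneg_left hb h0
  have e3 := mul_nonneg (mul_nonneg h0 (sub_nonneg.2 h1)) hs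
  linarith

/-- Within distance `D / M` of the minimizer the Hessian is comparable to the Hessian at the
minimizer, up to the factor `1 + D` both ways. -/
theorem hess_comparable (hpd : ∀ x, (hess x).PosDef)
    (hssc : StronglySelfConcordant hess M) {xstar p : Fin d → ℝ} {D : ℝ} (hD0 : 0 ≤ D)
    (hp : M ^ 2 * ((p - xstar) ⬝ᵥ hess xstar *ᵥ (p - xstar)) ≤ D ^ 2) (v : Fin d → ℝ) :
    v ⬝ᵥ hess p *ᵥ v ≤ (1 + D) * (v ⬝ᵥ hess xstar *ᵥ v) ∧
    v ⬝ᵥ hess xstar *ᵥ v ≤ (1 + D) * (v ⬝ᵥ hess p *ᵥ v) := by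
  have hq := dot_mulVec_nonneg (hpd xstar).posSemidef (p - xstar)
  have hr : M * Real.sqrt ((p - xstar) ⬝ᵥ hess xstar *ᵥ (p - xstar)) ≤ D := by
    apply le_of_sq_le_sq _ hD0
    rwa [mul_pow, Real.sq_sqrt hq]
  have h1 := hssc.quad_le p xstar xstar v
  have h2 := hssc.quad_le xstar p xstar v
  have e : (xstar - p) ⬝ᵥ hess xstar *ᵥ (xstar - p)
      = (p - xstar) ⬝ᵥ hess xstar *ᵥ (p - xstar) := by
    rw [← neg_sub p xstar, mulVec_neg, neg_dotProduct_neg]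
  rw [e] at h2
  have n1 := dot_mulVec_nonneg (hpd xstar).posSemidef v
  have n2 := dot_mulVec_nonneg (hpd p).posSemidef v
  exact ⟨h1.trans (by gcongr), h2.trans (by gcongr)⟩

/-- Mean value form of the gradient difference, tested against a fixed vector. -/
theorem exists_grad_sub_eq (hf : ContDiff ℝ 2 f) (hgrad : ∀ x v, fderiv ℝ f x v = grad x ⬝ᵥ v)
    (hhess : ∀ x v, fderiv ℝ grad x v = hess x *ᵥ v) (p h v : Fin d → ℝ) :
    ∃ τ ∈ Set.Ioo (0 : ℝ) 1,
      v ⬝ᵥ (grad (p + h) - grad p) = v ⬝ᵥ hess (p + τ • h) *ᵥ h := by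
  obtain ⟨τ, hτ, h1⟩ := exists_hasDerivAt_eq_slope (fun τ : ℝ => v ⬝ᵥ grad (p + τ • h))
    (fun τ => v ⬝ᵥ hess (p + τ • h) *ᵥ h) (zero_lt_one' ℝ)
    (fun τ _ => (hasDerivAt_line_grad hf hgrad hhess p h v τ).continuousAt.continuousWithinAt)
    (fun τ _ => hasDerivAt_line_grad hf hgrad hhess p h v τ)
  refine ⟨τ, hτ, ?_⟩
  rw [h1, dotProduct_sub]
  simp

/-- If `∇²f ⪯ P` along the step, then `yᵀ P⁻¹ y ≤ sᵀ y`. Writing `v = P⁻¹ y`, integrate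
`(v - s)ᵀ ∇²f (v - s) ≥ 0` along the step. -/
theorem curvature_le (hf : ContDiff ℝ 2 f) (hgrad : ∀ x v, fderiv ℝ f x v = grad x ⬝ᵥ v)
    (hhess : ∀ x v, fderiv ℝ grad x v = hess x *ᵥ v) (hpd : ∀ x, (hess x).PosDef)
    {p s : Fin d → ℝ} {P : Matrix (Fin d) (Fin d) ℝ} (hP : P.PosDef)
    (hle : ∀ τ ∈ Set.Ioo (0 : ℝ) 1, ∀ v, v ⬝ᵥ hess (p + τ • s) *ᵥ v ≤ v ⬝ᵥ P *ᵥ v) :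
    (grad (p + s) - grad p) ⬝ᵥ P⁻¹ *ᵥ (grad (p + s) - grad p)
      ≤ s ⬝ᵥ (grad (p + s) - grad p) := by
  set y := grad (p + s) - grad p with hy
  set v := P⁻¹ *ᵥ y with hv
  have hPv : P *ᵥ v = y := mulVec_inv_mulVec hP y
  obtain ⟨τ, hτ, h1⟩ := exists_grad_sub_eq hf hgrad hhess p s ((2 : ℝ) • v - s)
  rw [← hy] at h1
  have h2 := hle τ hτ v
  have h3 := dot_mulVec_nonneg (hpd (p + τ • s)).posSemidef (v - s)
  have h4 := dot_mulVec_comm (hpd (p + τ • s)).isHermitian s v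
  rw [hPv] at h2
  simp only [mulVec_sub, dotProduct_sub, sub_dotProduct, smul_dotProduct, smul_eq_mul] at h1 h3
  rw [dotProduct_comm y v]
  linarith

/-- A Polyak–Łojasiewicz-type inequality: if `∇²f(x⋆) ⪯ c ∇²f` between `x⋆` and `x`, then
`f(x) - f(x⋆) ≤ c ∇f(x)ᵀ ∇²f(x⋆)⁻¹ ∇f(x)`. -/
theorem gap_le (hf : ContDiff ℝ 2 f) (hgrad : ∀ x v, fderiv ℝ f x v = grad x ⬝ᵥ v)
    (hhess : ∀ x v, fderiv ℝ grad x v = hess x *ᵥ v) (hpd : ∀ x, (hess x).PosDef)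
    {xstar x : Fin d → ℝ} (hstar : grad xstar = 0) {c : ℝ} (hc : 0 < c)
    (hle : ∀ τ ∈ Set.Ioo (0 : ℝ) 1, ∀ v,
      v ⬝ᵥ hess xstar *ᵥ v ≤ c * (v ⬝ᵥ hess (xstar + τ • (x - xstar)) *ᵥ v)) :
    f x - f xstar ≤ c * (grad x ⬝ᵥ (hess xstar)⁻¹ *ᵥ grad x) := by
  set h := x - xstar with hh
  have hx1 : xstar + h = x := by simp [hh]
  -- convexity: `f x - f x⋆ ≤ ∇f(x)ᵀ h`
  have hconv : f x - f xstar ≤ h ⬝ᵥ grad x := by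
    obtain ⟨τ, hτ, h1⟩ := exists_hasDerivAt_eq_slope (fun τ : ℝ => f (xstar + τ • h))
      (fun τ => grad (xstar + τ • h) ⬝ᵥ h) (zero_lt_one' ℝ)
      (fun τ _ => (hasDerivAt_line_f hf hgrad xstar h τ).continuousAt.continuousWithinAt)
      (fun τ _ => hasDerivAt_line_f hf hgrad xstar h τ)
    simp only [one_smul, hx1, zero_smul, add_zero, sub_zero, div_one] at h1
    obtain ⟨σ, -, h2⟩ := exists_grad_sub_eq hf hgrad hhess (xstar + τ • h) ((1 - τ) • h) h
    have h3 : xstar + τ • h + (1 - τ) • h = x := by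
      rw [add_assoc, ← add_smul]
      simp [hx1]
    rw [h3, dotProduct_sub, mulVec_smul, dotProduct_smul, smul_eq_mul] at h2
    have h4 := mul_nonneg (sub_nonneg.2 hτ.2.le)
      (dot_mulVec_nonneg (hpd (xstar + τ • h + σ • (1 - τ) • h)).posSemidef h)
    rw [← h1, dotProduct_comm]
    linarith
  obtain ⟨τ, hτ, h1⟩ := exists_grad_sub_eq hf hgrad hhess xstar h h
  rw [hx1, hstar, sub_zero] at h1
  have h2 := hle τ hτ h
  rw [← h1] at h2
  set g := grad x with hg
  set v := (hess xstar)⁻¹ *ᵥ g with hv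
  have hHv : hess xstar *ᵥ v = g := mulVec_inv_mulVec (hpd xstar) g
  have h3 := dot_mulVec_nonneg (hpd xstar).posSemidef (h - c • v)
  have h4 : v ⬝ᵥ hess xstar *ᵥ h = h ⬝ᵥ g := by
    rw [dot_mulVec_comm (hpd xstar).isHermitian, hHv]
  simp only [mulVec_sub, mulVec_smul, dotProduct_sub, sub_dotProduct, smul_dotProduct,
    dotProduct_smul, smul_eq_mul, hHv, h4] at h3
  rw [dotProduct_comm g v]
  have h5 : c * (h ⬝ᵥ g) ≤ c * (c * (v ⬝ᵥ g)) := by nlinarith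
  exact hconv.trans (le_of_mul_le_mul_left h5 hc)

end

/-! ### The convergence rate -/

/-- The scalar recursion behind the rate. If each contraction factor is at most `1 - κ ρ`, where
`log ρ` dominates the increase of the potential `V`, the factor can be compared with
`b = 1 - κ exp L`, at the price of an exponential of the change of `V`. -/
theorem factor_le {κ ρ L v v' : ℝ} (hκ : 0 < κ) (hρ : 0 < ρ) (hb : 0 < 1 - κ * Real.exp L)
    (hV : v' - v ≤ Real.log ρ) :
    1 - κ * ρ ≤ (1 - κ * Real.exp L) *
      Real.exp (κ * Real.exp L / (1 - κ * Real.exp L) * (L + v - v')) := by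
  set b := 1 - κ * Real.exp L with hbdef
  -- the tangent to `exp` at `L` gives `ρ ≥ exp L * (1 + log ρ - L)`
  have h1 : Real.exp L * (1 + (v' - v) - L) ≤ ρ := by
    have h2 := Real.add_one_le_exp (Real.log ρ - L)
    have h3 : Real.exp L * Real.exp (Real.log ρ - L) = ρ := by
      rw [← Real.exp_add, add_sub_cancel, Real.exp_log hρ]
    rw [← h3]
    apply mul_le_mul_of_nonneg_left _ (Real.exp_pos L).le
    linarith
  have h4 := Real.add_one_le_exp (κ * Real.exp L / b * (L + v - v'))
  have h5 := mul_le_mul_of_nonneg_left h4 hb.le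
  have h6 : b * (κ * Real.exp L / b * (L + v - v') + 1)
      = κ * Real.exp L * (L + v - v') + b := by
    field_simp
  have h7 := mul_le_mul_of_nonneg_left h1 hκ.le
  rw [h6] at h5
  nlinarith

/-- Global linear convergence of BFGS (Theorem 1, first rate). -/
theorem bfgs_global_linear_rate {d : ℕ}
    (f : (Fin d → ℝ) → ℝ)
    (grad : (Fin d → ℝ) → (Fin d → ℝ))
    (hess : (Fin d → ℝ) → Matrix (Fin d) (Fin d) ℝ)
    (hf : ContDiff ℝ 2 f)
    (hgrad : ∀ x v, fderiv ℝ f x v = grad x ⬝ᵥ v)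
    (hhess : ∀ x v, fderiv ℝ grad x v = hess x *ᵥ v)
    (hpd : ∀ x, (hess x).PosDef)
    (M : ℝ) (hM : 0 < M)
    (hssc : StronglySelfConcordant hess M)
    (xstar : Fin d → ℝ) (hmin : ∀ y, f xstar ≤ f y)
    (α β : ℝ) (hα0 : 0 < α) (hα : α < 1/2) (hαβ : α < β) (hβ : β < 1)
    (x : ℕ → Fin d → ℝ) (B : ℕ → Matrix (Fin d) (Fin d) ℝ) (η : ℕ → ℝ)
    (hB0symm : (B 0).IsSymm) (hB0pd : (B 0).PosDef)
    (hx0 : f xstar < f (x 0))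
    (hη : ∀ t, 0 < η t)
    (hxupd : ∀ t, x (t+1) = x t + η t • (-((B t)⁻¹ *ᵥ grad (x t))))
    (hBupd : ∀ t, B (t+1) = bfgsUpdate (B t) (x (t+1) - x t) (grad (x (t+1)) - grad (x t)))
    (hAW1 : ∀ t, f (x (t+1)) ≤
      f (x t) + α * η t * (grad (x t) ⬝ᵥ (-((B t)⁻¹ *ᵥ grad (x t)))))
    (hAW2 : ∀ t, grad (x (t+1)) ⬝ᵥ (-((B t)⁻¹ *ᵥ grad (x t))) ≥
      β * (grad (x t) ⬝ᵥ (-((B t)⁻¹ *ᵥ grad (x t)))))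
    (C : ℕ → ℝ) (hC : ∀ t, C t = f (x t) - f xstar)
    (D : ℕ → ℝ) (hD : ∀ t, 0 ≤ D t ∧ omegaFn (D t / 2) = M ^ 2 * C t / 4)
    (S : Matrix (Fin d) (Fin d) ℝ) (hSpd : S.PosDef) (hSsq : S * S = hess xstar)
    (Bbar : Matrix (Fin d) (Fin d) ℝ)
    (hBbar : Bbar = (1 + D 0)⁻¹ • (S⁻¹ * B 0 * S⁻¹))
    (t : ℕ) (ht : 1 ≤ t) :
    (f (x t) - f xstar) / (f (x 0) - f xstar) ≤
      (1 - α * (1 - β) * Real.exp (-(Psi d Bbar) / (t : ℝ)) / (1 + D 0) ^ 2) ^ t := by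
  have hstar : grad xstar = 0 := by
    have h1 : IsLocalMin f xstar := Filter.Eventually.of_forall hmin
    have h2 := h1.fderiv_eq_zero
    apply dotProduct_eq_zero _
    intro v
    rw [← hgrad, h2]
    rfl
  set c := 1 + D 0 with hcdef
  have hc : 0 < c := by linarith [(hD 0).1]
  -- the weight is `P = c ∇²f(x⋆)`, entering through its inverse `Q`
  have hPpd : (c • hess xstar).PosDef := (hpd xstar).smul hc
  set Q := c⁻¹ • (hess xstar)⁻¹ with hQdef
  have hQ : Q.PosDef := (hpd xstar).inv.smul (inv_pos.2 hc)
  have hPQ : (c • hess xstar)⁻¹ = Q := by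
    have hdet := (Matrix.isUnit_iff_isUnit_det _).1 (hpd xstar).isUnit
    apply Matrix.inv_eq_right_inv
    rw [hQdef, Matrix.smul_mul, Matrix.mul_smul, smul_smul, mul_inv_cancel₀ hc.ne', one_smul,
      Matrix.mul_nonsing_inv _ hdet]
  set V : ℕ → ℝ := fun n => Psi d (c⁻¹ • (S⁻¹ * B n * S⁻¹)) with hVdef
  have hVQ : ∀ n, V n = (Q * B n).trace - d - Real.log (Q * B n).det := by
    intro n
    rw [hVdef, hQdef, ← hSsq]
    exact Psi_conj S c
  -- at a stationary point the iteration stalls and the update is trivial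
  have hstall : ∀ n, grad (x n) = 0 → x (n + 1) = x n ∧ B (n + 1) = B n := by
    intro n hn
    have h1 : x (n + 1) = x n := by
      rw [hxupd n, hn]
      simp
    refine ⟨h1, ?_⟩
    rw [hBupd n, h1]
    simp [bfgsUpdate]
  have hdesc : ∀ n, (B n).PosDef → grad (x n) ≠ 0 →
      0 < -(grad (x n) ⬝ᵥ (x (n + 1) - x n)) ∧
      B n *ᵥ (x (n + 1) - x n) = -(η n • grad (x n)) ∧
      f (x (n + 1)) ≤ f (x n) - α * -(grad (x n) ⬝ᵥ (x (n + 1) - x n)) ∧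
      (1 - β) * -(grad (x n) ⬝ᵥ (x (n + 1) - x n))
        ≤ (x (n + 1) - x n) ⬝ᵥ (grad (x (n + 1)) - grad (x n)) := by
    intro n hn hg
    have hs : x (n + 1) - x n = η n • (-((B n)⁻¹ *ᵥ grad (x n))) := by
      rw [hxupd n, add_sub_cancel_left]
    have hq := dot_mulVec_pos hn.inv hg
    have hA1 := hAW1 n
    have hA2 := mul_le_mul_of_nonneg_left (hAW2 n) (hη n).le
    rw [hs]
    refine ⟨?_, ?_, ?_, ?_⟩
    · rw [dotProduct_smul, dotProduct_neg, smul_eq_mul]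
      have := mul_pos (hη n) hq
      linarith
    · rw [mulVec_smul, mulVec_neg, mulVec_inv_mulVec hn, smul_neg]
    · rw [dotProduct_smul, smul_eq_mul]
      linarith
    · rw [smul_dotProduct, dotProduct_smul, smul_eq_mul, smul_eq_mul,
        dotProduct_comm _ (grad (x (n + 1)) - grad (x n)), sub_dotProduct]
      linarith
  have hsy : ∀ n, (B n).PosDef → grad (x n) ≠ 0 →
      0 < (x (n + 1) - x n) ⬝ᵥ (grad (x (n + 1)) - grad (x n)) := by
    intro n hn hg
    obtain ⟨h1, -, -, h2⟩ := hdesc n hn hg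
    have := mul_pos (sub_pos.2 hβ) h1
    linarith
  have hsne : ∀ n, (B n).PosDef → grad (x n) ≠ 0 → x (n + 1) - x n ≠ 0 := by
    intro n hn hg h0
    have := hsy n hn hg
    rw [h0, zero_dotProduct] at this
    exact this.false
  have hBpd : ∀ n, (B n).PosDef := by
    intro n
    induction n with
    | zero => exact hB0pd
    | succ n ih =>
      by_cases hg : grad (x n) = 0
      · rw [(hstall n hg).2]
        exact ih
      · rw [hBupd n]
        exact bfgsUpdate_posDef ih (hsne n ih hg) (hsy n ih hg)
  have hmono : ∀ n, f (x n) ≤ f (x 0) := by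
    intro n
    induction n with
    | zero => exact le_rfl
    | succ n ih =>
      by_cases hg : grad (x n) = 0
      · rw [(hstall n hg).1]
        exact ih
      · obtain ⟨h1, -, h2, -⟩ := hdesc n (hBpd n) hg
        have := mul_pos hα0 h1
        linarith
  have hD0 := (hD 0).1
  have hDeq := (hD 0).2
  rw [hC 0] at hDeq
  have hball : ∀ n, M ^ 2 * ((x n - xstar) ⬝ᵥ hess xstar *ᵥ (x n - xstar)) ≤ D 0 ^ 2 := fun n =>
    dist_le_of_sublevel hf hgrad hhess hpd hM hssc hstar hD0 hDeq (hmono n)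
  have hseg : ∀ (a s : Fin d → ℝ) (τ : ℝ), τ ∈ Set.Ioo (0 : ℝ) 1 →
      M ^ 2 * ((a - xstar) ⬝ᵥ hess xstar *ᵥ (a - xstar)) ≤ D 0 ^ 2 →
      M ^ 2 * ((a + s - xstar) ⬝ᵥ hess xstar *ᵥ (a + s - xstar)) ≤ D 0 ^ 2 →
      M ^ 2 * ((a + τ • s - xstar) ⬝ᵥ hess xstar *ᵥ (a + τ • s - xstar)) ≤ D 0 ^ 2 := by
    intro a s τ hτ h1 h2
    rw [← le_div_iff₀' (by positivity)] at h1 h2 ⊢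
    rw [add_sub_right_comm] at h2 ⊢
    exact quad_segment_le (hpd xstar) _ _ hτ.1.le hτ.2.le h1 h2
  have hcurv : ∀ n, (grad (x (n + 1)) - grad (x n)) ⬝ᵥ Q *ᵥ (grad (x (n + 1)) - grad (x n))
      ≤ (x (n + 1) - x n) ⬝ᵥ (grad (x (n + 1)) - grad (x n)) := by
    intro n
    have h := curvature_le (p := x n) (s := x (n + 1) - x n) hf hgrad hhess hpd hPpd (by
      intro τ hτ v
      rw [smul_mulVec, dotProduct_smul, smul_eq_mul]
      refine (hess_comparable hpd hssc hD0 (hseg _ _ τ hτ (hball n) ?_) v).1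
      rw [add_sub_cancel]
      exact hball (n + 1))
    rwa [add_sub_cancel, hPQ] at h
  have hgap : ∀ n, f (x n) - f xstar ≤ c ^ 2 * (grad (x n) ⬝ᵥ Q *ᵥ grad (x n)) := by
    intro n
    have h := gap_le (x := x n) hf hgrad hhess hpd hstar hc (by
      intro τ hτ v
      refine (hess_comparable hpd hssc hD0 (hseg _ _ τ hτ ?_ ?_) v).2
      · simp only [sub_self, zero_dotProduct, mul_zero]
        positivity
      · rw [add_sub_cancel]
        exact hball n)
    refine h.trans_eq ?_
    rw [hQdef, smul_mulVec, dotProduct_smul, smul_eq_mul]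
    field_simp
  have htpos : (0 : ℝ) < t := by exact_mod_cast ht
  have hV0 : 0 ≤ V 0 := Psi_nonneg (conj_posDef hSpd (hBpd 0) hc)
  rw [hBbar, show Psi d (c⁻¹ • (S⁻¹ * B 0 * S⁻¹)) = V 0 from rfl]
  set L := -(V 0) / (t : ℝ) with hL
  have hL0 : L ≤ 0 := div_nonpos_of_nonpos_of_nonneg (by linarith) htpos.le
  set κ := α * (1 - β) / c ^ 2 with hκdef
  have hκ : 0 < κ := div_pos (mul_pos hα0 (sub_pos.2 hβ)) (by positivity)
  have hκ1 : κ < 1 := by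
    rw [hκdef, div_lt_one (by positivity)]
    nlinarith
  rw [show α * (1 - β) * Real.exp L / c ^ 2 = κ * Real.exp L by rw [hκdef]; ring]
  have hb : 0 < 1 - κ * Real.exp L := by
    have := Real.exp_le_one_iff.2 hL0
    nlinarith [Real.exp_pos L]
  set b := 1 - κ * Real.exp L with hbdef
  have hmain : ∀ n : ℕ, f (x n) - f xstar ≤ (f (x 0) - f xstar) * b ^ n *
      Real.exp (κ * Real.exp L / b * (n * L + V 0 - V n)) := by
    intro n
    induction n with
    | zero => simp
    | succ n ih =>
      by_cases hg : grad (x n) = 0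
      · have h1 := hgap n
        rw [hg, zero_dotProduct, mul_zero] at h1
        rw [(hstall n hg).1]
        refine h1.trans ?_
        have := sub_pos.2 hx0
        positivity
      · obtain ⟨ha, hBs, hdec, hwolfe⟩ := hdesc n (hBpd n) hg
        have hsyn := hsy n (hBpd n) hg
        have hstep := Psi_step hQ (hBpd n) (hη n) (hsne n (hBpd n) hg) hg hsyn hBs (hcurv n)
        rw [← hBupd n, ← hVQ, ← hVQ] at hstep
        have hk := dot_mulVec_pos hQ hg
        have hgapn := hgap n
        have hCn := sub_nonneg.2 (hmin (x n))
        set a := -(grad (x n) ⬝ᵥ (x (n + 1) - x n))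
        set k := grad (x n) ⬝ᵥ Q *ᵥ grad (x n)
        set w := (x (n + 1) - x n) ⬝ᵥ (grad (x (n + 1)) - grad (x n))
        set ρ := a ^ 2 / (k * w) with hρdef
        have hρ : 0 < ρ := by positivity
        have hfac := factor_le (L := L) hκ hρ hb hstep
        rw [← hbdef] at hfac
        -- `α a = α ρ (w / a) k`, with `w / a ≥ 1 - β` and `k ≥ (f(xₙ) - f⋆) / c²`
        have hdecr : κ * ρ * (f (x n) - f xstar) ≤ α * a := by
          have e1 : κ * ρ * (f (x n) - f xstar) ≤ κ * ρ * (c ^ 2 * k) := by gcongr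
          have e2 : κ * ρ * (c ^ 2 * k) = α * a * ((1 - β) * a / w) := by
            rw [hκdef, hρdef]
            field_simp
          have e3 : (1 - β) * a / w ≤ 1 := (div_le_one hsyn).2 hwolfe
          rw [e2] at e1
          have e4 : α * a * ((1 - β) * a / w) ≤ α * a * 1 := by gcongr
          linarith
        calc f (x (n + 1)) - f xstar ≤ (f (x n) - f xstar) * (1 - κ * ρ) := by linarith
          _ ≤ (f (x n) - f xstar) *
              (b * Real.exp (κ * Real.exp L / b * (L + V n - V (n + 1)))) := by gcongr
          _ ≤ ((f (x 0) - f xstar) * b ^ n *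
              Real.exp (κ * Real.exp L / b * (n * L + V 0 - V n))) *
              (b * Real.exp (κ * Real.exp L / b * (L + V n - V (n + 1)))) := by gcongr
          _ = (f (x 0) - f xstar) * b ^ (n + 1) *
              Real.exp (κ * Real.exp L / b * ((n + 1 : ℕ) * L + V 0 - V (n + 1))) := by
            rw [show κ * Real.exp L / b * ((n + 1 : ℕ) * L + V 0 - V (n + 1))
              = κ * Real.exp L / b * (n * L + V 0 - V n)
                + κ * Real.exp L / b * (L + V n - V (n + 1)) by push_cast; ring, Real.exp_add]
            ring
  have hfin := hmain t
  -- `t L = -V₀`, so the exponent at time `t` is a negative multiple of `V t ≥ 0`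
  have hVt : 0 ≤ V t := Psi_nonneg (conj_posDef hSpd (hBpd t) hc)
  have htL : (t : ℝ) * L = -V 0 := by
    rw [hL]
    field_simp
  have hexp : Real.exp (κ * Real.exp L / b * (t * L + V 0 - V t)) ≤ 1 := by
    rw [Real.exp_le_one_iff, htL]
    apply mul_nonpos_of_nonneg_of_nonpos (by positivity)
    linarith
  have hC0 := sub_pos.2 hx0
  rw [div_le_iff₀ hC0]
  have : (f (x 0) - f xstar) * b ^ t *
      Real.exp (κ * Real.exp L / b * (t * L + V 0 - V t)) ≤ (f (x 0) - f xstar) * b ^ t * 1 := by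
    gcongr
  linarith
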